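/- In the Monge chart, the values at the origin of the coefficients of the differential equation of principal mean curvature lines are (E g_H − G e_H)(0,0) = [(t₁² + t₂²) − (r₁² + r₂²)]/2 and (E f_H − F e_H)(0,0) = [s₁(t₁ + r₁) + s₂(t₂ + r₂)]/2. Consequently, the origin is an umbilic singularity (i.e., both (E g_H − G e_H)(0,0) = 0 and (E f_H − F e_H)(0,0) = 0) if and only if t₁² + t₂² = r₁² + r₂² and s₁(t₁ + r₁) + s₂(t₂ + r₂) = 0. -/

import Mathlib

/-! At the origin the graph is tangent to the `(u, v)`-plane and `(α_u, α_v, N₁, N₂)` is the standard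
basis of `ℝ⁴` (`αu_zero`, `αv_zero`, `N1_zero`, `N2_zero`). Hence `E = G = 1` and `F = 0` there.
The second derivatives of `α` are the vectors `(0, 0, ∂²h₁, ∂²h₂)`, so
`H = ((r₁ + t₁) / 2) N₁ + ((r₂ + t₂) / 2) N₂`, and both coefficients are obtained by expanding inner
products. Differentiation of the `ℝ⁴`-valued maps is coordinatewise (`fderiv_vec_apply`); smoothness
of the `hᵢ` ensures that no derivative takes its default value. -/

noncomputable section

open scoped RealInnerProductSpace

abbrev E4 : Type := EuclideanSpace ℝ (Fin 4)

/-- Partial derivative with respect to the first variable `u`. -/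
def pdu {X : Type*} [NormedAddCommGroup X] [NormedSpace ℝ X]
    (f : ℝ × ℝ → X) (p : ℝ × ℝ) : X := fderiv ℝ f p (1, 0)

/-- Partial derivative with respect to the second variable `v`. -/
def pdv {X : Type*} [NormedAddCommGroup X] [NormedSpace ℝ X]
    (f : ℝ × ℝ → X) (p : ℝ × ℝ) : X := fderiv ℝ f p (0, 1)

/-- The wedge `x ∧ y ∧ z` of three vectors of `ℝ⁴`: the unique vector satisfying
`⟪x ∧ y ∧ z, w⟫ = det (x, y, z, w)` for all `w ∈ ℝ⁴`. -/
def wedge (x y z : E4) : E4 :=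
  (WithLp.equiv 2 (Fin 4 → ℝ)).symm fun i =>
    Matrix.det (Matrix.of ![(x : Fin 4 → ℝ), y, z, fun j => if j = i then 1 else 0])

namespace Monge

/-- The immersion `α (u,v) = (u, v, h₁(u,v), h₂(u,v))` in the Monge chart. -/
def α (h₁ h₂ : ℝ × ℝ → ℝ) (p : ℝ × ℝ) : E4 :=
  (WithLp.equiv 2 (Fin 4 → ℝ)).symm ![p.1, p.2, h₁ p, h₂ p]

def αu (h₁ h₂ : ℝ × ℝ → ℝ) : ℝ × ℝ → E4 := pdu (α h₁ h₂)
def αv (h₁ h₂ : ℝ × ℝ → ℝ) : ℝ × ℝ → E4 := pdv (α h₁ h₂)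
def αuu (h₁ h₂ : ℝ × ℝ → ℝ) : ℝ × ℝ → E4 := pdu (αu h₁ h₂)
def αuv (h₁ h₂ : ℝ × ℝ → ℝ) : ℝ × ℝ → E4 := pdv (αu h₁ h₂)
def αvv (h₁ h₂ : ℝ × ℝ → ℝ) : ℝ × ℝ → E4 := pdv (αv h₁ h₂)

/-- `B₁ = (−∂h₁/∂u, −∂h₁/∂v, 1, 0)`. -/
def B1 (h₁ : ℝ × ℝ → ℝ) (p : ℝ × ℝ) : E4 :=
  (WithLp.equiv 2 (Fin 4 → ℝ)).symm ![-(pdu h₁ p), -(pdv h₁ p), 1, 0]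

/-- `B₂ = α_u ∧ α_v ∧ B₁`. -/
def B2 (h₁ h₂ : ℝ × ℝ → ℝ) (p : ℝ × ℝ) : E4 :=
  wedge (αu h₁ h₂ p) (αv h₁ h₂ p) (B1 h₁ p)

/-- `N₁ = B₁/|B₁|`. -/
def N1 (h₁ : ℝ × ℝ → ℝ) (p : ℝ × ℝ) : E4 := ‖B1 h₁ p‖⁻¹ • B1 h₁ p

/-- `N₂ = B₂/|B₂|`. -/
def N2 (h₁ h₂ : ℝ × ℝ → ℝ) (p : ℝ × ℝ) : E4 := ‖B2 h₁ h₂ p‖⁻¹ • B2 h₁ h₂ p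

/-- Coefficient `E` of the first fundamental form. -/
def Ec (h₁ h₂ : ℝ × ℝ → ℝ) (p : ℝ × ℝ) : ℝ := ⟪αu h₁ h₂ p, αu h₁ h₂ p⟫
/-- Coefficient `F` of the first fundamental form. -/
def Fc (h₁ h₂ : ℝ × ℝ → ℝ) (p : ℝ × ℝ) : ℝ := ⟪αu h₁ h₂ p, αv h₁ h₂ p⟫
/-- Coefficient `G` of the first fundamental form. -/
def Gc (h₁ h₂ : ℝ × ℝ → ℝ) (p : ℝ × ℝ) : ℝ := ⟪αv h₁ h₂ p, αv h₁ h₂ p⟫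

def e1 (h₁ h₂ : ℝ × ℝ → ℝ) (p : ℝ × ℝ) : ℝ := ⟪αuu h₁ h₂ p, N1 h₁ p⟫
def f1 (h₁ h₂ : ℝ × ℝ → ℝ) (p : ℝ × ℝ) : ℝ := ⟪αuv h₁ h₂ p, N1 h₁ p⟫
def g1 (h₁ h₂ : ℝ × ℝ → ℝ) (p : ℝ × ℝ) : ℝ := ⟪αvv h₁ h₂ p, N1 h₁ p⟫
def e2 (h₁ h₂ : ℝ × ℝ → ℝ) (p : ℝ × ℝ) : ℝ := ⟪αuu h₁ h₂ p, N2 h₁ h₂ p⟫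
def f2 (h₁ h₂ : ℝ × ℝ → ℝ) (p : ℝ × ℝ) : ℝ := ⟪αuv h₁ h₂ p, N2 h₁ h₂ p⟫
def g2 (h₁ h₂ : ℝ × ℝ → ℝ) (p : ℝ × ℝ) : ℝ := ⟪αvv h₁ h₂ p, N2 h₁ h₂ p⟫

/-- First component `H₁ = (G e₁ − 2F f₁ + E g₁)/(2(EG − F²))` of the mean curvature vector. -/
def Hc1 (h₁ h₂ : ℝ × ℝ → ℝ) (p : ℝ × ℝ) : ℝ :=
  (Gc h₁ h₂ p * e1 h₁ h₂ p - 2 * Fc h₁ h₂ p * f1 h₁ h₂ p + Ec h₁ h₂ p * g1 h₁ h₂ p) /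
    (2 * (Ec h₁ h₂ p * Gc h₁ h₂ p - Fc h₁ h₂ p ^ 2))

/-- Second component `H₂ = (G e₂ − 2F f₂ + E g₂)/(2(EG − F²))` of the mean curvature vector. -/
def Hc2 (h₁ h₂ : ℝ × ℝ → ℝ) (p : ℝ × ℝ) : ℝ :=
  (Gc h₁ h₂ p * e2 h₁ h₂ p - 2 * Fc h₁ h₂ p * f2 h₁ h₂ p + Ec h₁ h₂ p * g2 h₁ h₂ p) /
    (2 * (Ec h₁ h₂ p * Gc h₁ h₂ p - Fc h₁ h₂ p ^ 2))

/-- The mean curvature vector `H = H₁N₁ + H₂N₂`. -/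
def Hvec (h₁ h₂ : ℝ × ℝ → ℝ) (p : ℝ × ℝ) : E4 :=
  Hc1 h₁ h₂ p • N1 h₁ p + Hc2 h₁ h₂ p • N2 h₁ h₂ p

def eH (h₁ h₂ : ℝ × ℝ → ℝ) (p : ℝ × ℝ) : ℝ := ⟪αuu h₁ h₂ p, Hvec h₁ h₂ p⟫
def fH (h₁ h₂ : ℝ × ℝ → ℝ) (p : ℝ × ℝ) : ℝ := ⟪αuv h₁ h₂ p, Hvec h₁ h₂ p⟫
def gH (h₁ h₂ : ℝ × ℝ → ℝ) (p : ℝ × ℝ) : ℝ := ⟪αvv h₁ h₂ p, Hvec h₁ h₂ p⟫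

end Monge

/-- `r = ∂²h/∂u²(0,0)`. -/
def rr (h : ℝ × ℝ → ℝ) : ℝ := pdu (pdu h) (0, 0)
/-- `s = ∂²h/∂u∂v(0,0)`. -/
def ss (h : ℝ × ℝ → ℝ) : ℝ := pdv (pdu h) (0, 0)
/-- `t = ∂²h/∂v²(0,0)`. -/
def tt (h : ℝ × ℝ → ℝ) : ℝ := pdv (pdv h) (0, 0)
/-- `a = ∂³h/∂u³(0,0)`. -/
def aa (h : ℝ × ℝ → ℝ) : ℝ := pdu (pdu (pdu h)) (0, 0)
/-- `d = ∂³h/∂u²∂v(0,0)`. -/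
def dd (h : ℝ × ℝ → ℝ) : ℝ := pdv (pdu (pdu h)) (0, 0)
/-- `b = ∂³h/∂u∂v²(0,0)`. -/
def bb (h : ℝ × ℝ → ℝ) : ℝ := pdv (pdv (pdu h)) (0, 0)
/-- `c = ∂³h/∂v³(0,0)`. -/
def cc (h : ℝ × ℝ → ℝ) : ℝ := pdv (pdv (pdv h)) (0, 0)

open Monge


/-- The derivative of an `ℝ⁴`-valued map is computed coordinate by coordinate. -/
theorem fderiv_vec_apply {a b c d : ℝ × ℝ → ℝ} {p : ℝ × ℝ}
    (ha : DifferentiableAt ℝ a p) (hb : DifferentiableAt ℝ b p)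
    (hc : DifferentiableAt ℝ c p) (hd : DifferentiableAt ℝ d p) (w : ℝ × ℝ) :
    fderiv ℝ (fun q => (WithLp.equiv 2 (Fin 4 → ℝ)).symm ![a q, b q, c q, d q]) p w =
      (WithLp.equiv 2 (Fin 4 → ℝ)).symm
        ![fderiv ℝ a p w, fderiv ℝ b p w, fderiv ℝ c p w, fderiv ℝ d p w] := by
  have hdiff : DifferentiableAt ℝ
      (fun q => ((WithLp.equiv 2 (Fin 4 → ℝ)).symm ![a q, b q, c q, d q] : E4)) p := by
    rw [differentiableAt_euclidean]
    intro i
    fin_cases i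
    exacts [ha, hb, hc, hd]
  ext i
  have hproj := ((EuclideanSpace.proj i : E4 →L[ℝ] ℝ).hasFDerivAt.comp p hdiff.hasFDerivAt).fderiv
  have happ := congrArg (fun L : ℝ × ℝ →L[ℝ] ℝ => L w) hproj
  refine happ.symm.trans ?_
  fin_cases i <;> rfl

theorem pdu_smooth {h : ℝ × ℝ → ℝ} (hs : ContDiff ℝ (⊤ : ℕ∞) h) :
    ContDiff ℝ (⊤ : ℕ∞) (pdu h) :=
  (hs.fderiv_right (m := (⊤ : ℕ∞)) (by simp)).clm_apply contDiff_const

theorem pdv_smooth {h : ℝ × ℝ → ℝ} (hs : ContDiff ℝ (⊤ : ℕ∞) h) :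
    ContDiff ℝ (⊤ : ℕ∞) (pdv h) :=
  (hs.fderiv_right (m := (⊤ : ℕ∞)) (by simp)).clm_apply contDiff_const

theorem smooth_differentiableAt {h : ℝ × ℝ → ℝ} (hs : ContDiff ℝ (⊤ : ℕ∞) h) (p : ℝ × ℝ) :
    DifferentiableAt ℝ h p :=
  (hs.differentiable (by simp)).differentiableAt

section MongeChart

variable {h₁ h₂ : ℝ × ℝ → ℝ}

theorem αu_eq (s₁ : ContDiff ℝ (⊤ : ℕ∞) h₁) (s₂ : ContDiff ℝ (⊤ : ℕ∞) h₂) :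
    αu h₁ h₂ = fun p => (WithLp.equiv 2 (Fin 4 → ℝ)).symm ![1, 0, pdu h₁ p, pdu h₂ p] := by
  funext p
  refine (fderiv_vec_apply differentiableAt_fst differentiableAt_snd
    (smooth_differentiableAt s₁ p) (smooth_differentiableAt s₂ p) (1, 0)).trans ?_
  simp [pdu, fderiv_fst, fderiv_snd]

theorem αv_eq (s₁ : ContDiff ℝ (⊤ : ℕ∞) h₁) (s₂ : ContDiff ℝ (⊤ : ℕ∞) h₂) :
    αv h₁ h₂ = fun p => (WithLp.equiv 2 (Fin 4 → ℝ)).symm ![0, 1, pdv h₁ p, pdv h₂ p] := by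
  funext p
  refine (fderiv_vec_apply differentiableAt_fst differentiableAt_snd
    (smooth_differentiableAt s₁ p) (smooth_differentiableAt s₂ p) (0, 1)).trans ?_
  simp [pdv, fderiv_fst, fderiv_snd]

theorem αuu_zero (s₁ : ContDiff ℝ (⊤ : ℕ∞) h₁) (s₂ : ContDiff ℝ (⊤ : ℕ∞) h₂) :
    αuu h₁ h₂ (0, 0) = (WithLp.equiv 2 (Fin 4 → ℝ)).symm ![0, 0, rr h₁, rr h₂] := by
  rw [αuu, αu_eq s₁ s₂]
  refine (fderiv_vec_apply (differentiableAt_const _) (differentiableAt_const _)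
    (smooth_differentiableAt (pdu_smooth s₁) _)
    (smooth_differentiableAt (pdu_smooth s₂) _) (1, 0)).trans ?_
  simp [rr, pdu]

theorem αuv_zero (s₁ : ContDiff ℝ (⊤ : ℕ∞) h₁) (s₂ : ContDiff ℝ (⊤ : ℕ∞) h₂) :
    αuv h₁ h₂ (0, 0) = (WithLp.equiv 2 (Fin 4 → ℝ)).symm ![0, 0, ss h₁, ss h₂] := by
  rw [αuv, αu_eq s₁ s₂]
  refine (fderiv_vec_apply (differentiableAt_const _) (differentiableAt_const _)
    (smooth_differentiableAt (pdu_smooth s₁) _)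
    (smooth_differentiableAt (pdu_smooth s₂) _) (0, 1)).trans ?_
  simp [ss, pdv]

theorem αvv_zero (s₁ : ContDiff ℝ (⊤ : ℕ∞) h₁) (s₂ : ContDiff ℝ (⊤ : ℕ∞) h₂) :
    αvv h₁ h₂ (0, 0) = (WithLp.equiv 2 (Fin 4 → ℝ)).symm ![0, 0, tt h₁, tt h₂] := by
  rw [αvv, αv_eq s₁ s₂]
  refine (fderiv_vec_apply (differentiableAt_const _) (differentiableAt_const _)
    (smooth_differentiableAt (pdv_smooth s₁) _)
    (smooth_differentiableAt (pdv_smooth s₂) _) (0, 1)).trans ?_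
  simp [tt, pdv]

theorem αu_zero (s₁ : ContDiff ℝ (⊤ : ℕ∞) h₁) (s₂ : ContDiff ℝ (⊤ : ℕ∞) h₂)
    (g₁ : fderiv ℝ h₁ (0, 0) = 0) (g₂ : fderiv ℝ h₂ (0, 0) = 0) :
    αu h₁ h₂ (0, 0) = (WithLp.equiv 2 (Fin 4 → ℝ)).symm ![1, 0, 0, 0] := by
  simp [αu_eq s₁ s₂, pdu, g₁, g₂]

theorem αv_zero (s₁ : ContDiff ℝ (⊤ : ℕ∞) h₁) (s₂ : ContDiff ℝ (⊤ : ℕ∞) h₂)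
    (g₁ : fderiv ℝ h₁ (0, 0) = 0) (g₂ : fderiv ℝ h₂ (0, 0) = 0) :
    αv h₁ h₂ (0, 0) = (WithLp.equiv 2 (Fin 4 → ℝ)).symm ![0, 1, 0, 0] := by
  simp [αv_eq s₁ s₂, pdv, g₁, g₂]

theorem B1_zero (g₁ : fderiv ℝ h₁ (0, 0) = 0) :
    B1 h₁ (0, 0) = (WithLp.equiv 2 (Fin 4 → ℝ)).symm ![0, 0, 1, 0] := by
  simp [B1, pdu, pdv, g₁]

theorem N1_zero (g₁ : fderiv ℝ h₁ (0, 0) = 0) :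
    N1 h₁ (0, 0) = (WithLp.equiv 2 (Fin 4 → ℝ)).symm ![0, 0, 1, 0] := by
  rw [N1, B1_zero g₁]
  simp [EuclideanSpace.norm_eq, Fin.sum_univ_four]

/-- With the orientation convention of `wedge`, `e₁ ∧ e₂ ∧ e₃ = e₄`. -/
theorem wedge_std :
    wedge ((WithLp.equiv 2 (Fin 4 → ℝ)).symm ![1, 0, 0, 0])
      ((WithLp.equiv 2 (Fin 4 → ℝ)).symm ![0, 1, 0, 0])
      ((WithLp.equiv 2 (Fin 4 → ℝ)).symm ![0, 0, 1, 0]) =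
      (WithLp.equiv 2 (Fin 4 → ℝ)).symm ![0, 0, 0, 1] := by
  ext i
  fin_cases i <;> simp [wedge, Matrix.det_succ_row_zero, Fin.sum_univ_succ, Fin.succAbove]

theorem N2_zero (s₁ : ContDiff ℝ (⊤ : ℕ∞) h₁) (s₂ : ContDiff ℝ (⊤ : ℕ∞) h₂)
    (g₁ : fderiv ℝ h₁ (0, 0) = 0) (g₂ : fderiv ℝ h₂ (0, 0) = 0) :
    N2 h₁ h₂ (0, 0) = (WithLp.equiv 2 (Fin 4 → ℝ)).symm ![0, 0, 0, 1] := by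
  rw [N2, B2, αu_zero s₁ s₂ g₁ g₂, αv_zero s₁ s₂ g₁ g₂, B1_zero g₁, wedge_std]
  simp [EuclideanSpace.norm_eq, Fin.sum_univ_four]

theorem inner_vec (a b c d a' b' c' d' : ℝ) :
    ⟪((WithLp.equiv 2 (Fin 4 → ℝ)).symm ![a, b, c, d] : E4),
      (WithLp.equiv 2 (Fin 4 → ℝ)).symm ![a', b', c', d']⟫ =
      a * a' + b * b' + c * c' + d * d' := by
  simp [PiLp.inner_apply, Fin.sum_univ_four]
  ring

end MongeChart

/-- values at the origin of the coefficients `E g_H − G e_H` and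
`E f_H − F e_H`, and the characterization of umbilic singularities. -/
theorem stmt7
    (h₁ h₂ : ℝ × ℝ → ℝ)
    (h₁smooth : ContDiff ℝ (⊤ : ℕ∞) h₁) (h₂smooth : ContDiff ℝ (⊤ : ℕ∞) h₂)
    (h₁zero : h₁ (0, 0) = 0) (h₂zero : h₂ (0, 0) = 0)
    (h₁grad : fderiv ℝ h₁ (0, 0) = 0) (h₂grad : fderiv ℝ h₂ (0, 0) = 0) :
    (fun p => Ec h₁ h₂ p * gH h₁ h₂ p - Gc h₁ h₂ p * eH h₁ h₂ p) (0, 0) =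
      ((tt h₁ ^ 2 + tt h₂ ^ 2) - (rr h₁ ^ 2 + rr h₂ ^ 2)) / 2 ∧
    (fun p => Ec h₁ h₂ p * fH h₁ h₂ p - Fc h₁ h₂ p * eH h₁ h₂ p) (0, 0) =
      (ss h₁ * (tt h₁ + rr h₁) + ss h₂ * (tt h₂ + rr h₂)) / 2 ∧
    (((fun p => Ec h₁ h₂ p * gH h₁ h₂ p - Gc h₁ h₂ p * eH h₁ h₂ p) (0, 0) = 0 ∧
       (fun p => Ec h₁ h₂ p * fH h₁ h₂ p - Fc h₁ h₂ p * eH h₁ h₂ p) (0, 0) = 0) ↔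
      (tt h₁ ^ 2 + tt h₂ ^ 2 = rr h₁ ^ 2 + rr h₂ ^ 2 ∧
       ss h₁ * (tt h₁ + rr h₁) + ss h₂ * (tt h₂ + rr h₂) = 0)) := by
  have hu := αu_zero h₁smooth h₂smooth h₁grad h₂grad
  have hv := αv_zero h₁smooth h₂smooth h₁grad h₂grad
  have huu := αuu_zero h₁smooth h₂smooth
  have huv := αuv_zero h₁smooth h₂smooth
  have hvv := αvv_zero h₁smooth h₂smooth
  have n₁ := N1_zero h₁grad
  have n₂ := N2_zero h₁smooth h₂smooth h₁grad h₂grad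
  have hE : Ec h₁ h₂ (0, 0) = 1 := by rw [Ec, hu, inner_vec]; norm_num
  have hF : Fc h₁ h₂ (0, 0) = 0 := by rw [Fc, hu, hv, inner_vec]; norm_num
  have hG : Gc h₁ h₂ (0, 0) = 1 := by rw [Gc, hv, inner_vec]; norm_num
  have hH₁ : Hc1 h₁ h₂ (0, 0) = (rr h₁ + tt h₁) / 2 := by
    rw [Hc1, hE, hF, hG, e1, g1, huu, hvv, n₁, inner_vec, inner_vec]
    ring
  have hH₂ : Hc2 h₁ h₂ (0, 0) = (rr h₂ + tt h₂) / 2 := by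
    rw [Hc2, hE, hF, hG, e2, g2, huu, hvv, n₂, inner_vec, inner_vec]
    ring
  have hg : (fun p => Ec h₁ h₂ p * gH h₁ h₂ p - Gc h₁ h₂ p * eH h₁ h₂ p) (0, 0) =
      ((tt h₁ ^ 2 + tt h₂ ^ 2) - (rr h₁ ^ 2 + rr h₂ ^ 2)) / 2 := by
    simp only [gH, eH, Hvec, inner_add_right, inner_smul_right, hE, hG, hH₁, hH₂, huu, hvv, n₁, n₂,
      inner_vec]
    ring
  have hf : (fun p => Ec h₁ h₂ p * fH h₁ h₂ p - Fc h₁ h₂ p * eH h₁ h₂ p) (0, 0) =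
      (ss h₁ * (tt h₁ + rr h₁) + ss h₂ * (tt h₂ + rr h₂)) / 2 := by
    simp only [fH, Hvec, inner_add_right, inner_smul_right, hE, hF, hH₁, hH₂, huv, n₁, n₂,
      inner_vec]
    ring
  refine ⟨hg, hf, ?_⟩
  rw [hg, hf]
  constructor
  · rintro ⟨h, h'⟩
    exact ⟨by linarith, by linarith⟩
  · rintro ⟨h, h'⟩
    exact ⟨by linarith, by linarith⟩
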